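/- Let X be an ∞-pseudo-metric space, let {X_s}_{s∈S} be a family of subsets of X, and let x₀ ∈ ⋂_{s∈S} X_s be a point with the property that for each r > 0 there is t > 0 such that the family {X_s ∖ B(x₀,t)}_{s∈S} is r-disjoint. Then the function f : ⋁_{s∈S}(X_s, x₀) → ⋃_{s∈S} X_s that is the identity on each X_s is a coarse equivalence. -/

import Mathlib

open scoped ENNReal

open Classical in
/-- The wedge `∞`-pseudo-distance on the disjoint union of pointed `∞`-pseudo-metric
spaces `(Y_s, p_s)`: within one component it is the original distance, across components
it is `d(a, p_s) + d(p_t, b)`. -/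
noncomputable def wedgeEDist {S : Type} {Y : S → Type} [∀ s, PseudoEMetricSpace (Y s)]
    (p : ∀ s, Y s) : (Σ s, Y s) → (Σ s, Y s) → ℝ≥0∞
  | ⟨s, a⟩, ⟨t, b⟩ =>
    if h : s = t then edist a (h.symm ▸ b) else edist a (p s) + edist (p t) b

/-- A coarse equivalence with respect to given `∞`-pseudo-distances: bornologous,
effectively proper, and with coarsely dense image. -/
def CoarseEquivE {A B : Type} (dA : A → A → ℝ≥0∞) (dB : B → B → ℝ≥0∞) (f : A → B) : Prop :=
  (∀ R : ℝ, 0 < R → ∃ S' : ℝ, 0 < S' ∧ ∀ a a',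
    dA a a' ≤ ENNReal.ofReal R → dB (f a) (f a') ≤ ENNReal.ofReal S') ∧
  (∀ S' : ℝ, 0 < S' → ∃ R : ℝ, 0 < R ∧ ∀ a a',
    dB (f a) (f a') ≤ ENNReal.ofReal S' → dA a a' ≤ ENNReal.ofReal R) ∧
  (∃ C : ℝ, 0 ≤ C ∧ ∀ b, ∃ a, dB (f a) b ≤ ENNReal.ofReal C)

open scoped NNReal

/-! Along the wedge the distance between distinct pieces is that of the detour through the base
point, so the triangle inequality makes the map distance-nonincreasing. Conversely, two points of
distinct pieces at distance less than `r` in `X` cannot both be far from the base point: one of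
them lies within the radius `τ` beyond which the pieces are `r`-disjoint. The detour through the
base point therefore exceeds the distance in `X` by at most `2 * τ`. -/

/-- An `r`-disjoint family of subsets: points of distinct members are at distance at least `r`.
This is the notion in which the separation hypothesis on the pieces of a wedge is expressed;
the bound `r` may be infinite. -/
def RDisjoint {ι X : Type*} [PseudoEMetricSpace X] (r : ℝ≥0∞) (A : ι → Set X) : Prop :=
  Pairwise fun s t => ∀ a ∈ A s, ∀ b ∈ A t, r ≤ edist a b

section PseudoEMetric

variable {X : Type*} [PseudoEMetricSpace X] {x a b : X} {r τ ρ : ℝ≥0∞}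

theorem edist_add_edist_le_of_edist_le_or (h : edist a x ≤ τ ∨ edist b x ≤ τ)
    (hab : edist a b ≤ ρ) : edist a x + edist x b ≤ 2 * τ + ρ := by
  rw [two_mul, add_assoc]
  rcases h with ha | hb
  · have hxb : edist x b ≤ τ + ρ :=
      (edist_triangle_left x b a).trans (add_le_add ha hab)
    exact add_le_add ha hxb
  · have hax : edist a x ≤ τ + ρ := by
      rw [add_comm τ]
      exact (edist_triangle a b x).trans (add_le_add hab hb)
    rw [add_comm, edist_comm x b]
    exact add_le_add hb hax

theorem RDisjoint.edist_le_or_edist_le {ι : Type*} {A : ι → Set X} {s t : ι}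
    (hA : RDisjoint r fun i => A i \ Metric.closedEBall x τ) (hst : s ≠ t)
    (ha : a ∈ A s) (hb : b ∈ A t) (hab : edist a b < r) :
    edist a x ≤ τ ∨ edist b x ≤ τ := by
  by_contra! hfar
  exact hab.not_ge (hA hst a ⟨ha, hfar.1.not_ge⟩ b ⟨hb, hfar.2.not_ge⟩)

end PseudoEMetric

section Wedge

variable {S : Type} {Y : S → Type} [∀ s, PseudoEMetricSpace (Y s)]

theorem wedgeEDist_mk_self (p : ∀ s, Y s) {s : S} (a b : Y s) :
    wedgeEDist p ⟨s, a⟩ ⟨s, b⟩ = edist a b :=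
  dif_pos rfl

theorem wedgeEDist_mk_of_ne (p : ∀ s, Y s) {s t : S} (hst : s ≠ t) (a : Y s) (b : Y t) :
    wedgeEDist p ⟨s, a⟩ ⟨t, b⟩ = edist a (p s) + edist (p t) b :=
  dif_neg hst

variable {Z : Type*} [PseudoEMetricSpace Z] {K : ℝ≥0} {p : ∀ s, Y s} {z : Z} {f : ∀ s, Y s → Z}

theorem edist_le_mul_wedgeEDist (hf : ∀ s, LipschitzWith K (f s)) (hp : ∀ s, f s (p s) = z)
    (u v : Σ s, Y s) : edist (f u.1 u.2) (f v.1 v.2) ≤ K * wedgeEDist p u v := by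
  obtain ⟨s, a⟩ := u
  obtain ⟨t, b⟩ := v
  obtain rfl | hst := eq_or_ne s t
  · rw [wedgeEDist_mk_self]
    exact hf s a b
  · calc edist (f s a) (f t b)
        ≤ edist (f s a) z + edist z (f t b) := edist_triangle _ _ _
      _ = edist (f s a) (f s (p s)) + edist (f t (p t)) (f t b) := by rw [hp, hp]
      _ ≤ K * edist a (p s) + K * edist (p t) b := add_le_add (hf s _ _) (hf t _ _)
      _ = K * wedgeEDist p ⟨s, a⟩ ⟨t, b⟩ := by rw [wedgeEDist_mk_of_ne p hst, mul_add]

theorem wedgeEDist_le_mul_of_rDisjoint {r τ ρ : ℝ≥0∞}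
    (hf : ∀ s, AntilipschitzWith K (f s)) (hp : ∀ s, f s (p s) = z)
    (hdisj : RDisjoint r fun s => Set.range (f s) \ Metric.closedEBall z τ) (hρ : ρ < r)
    {u v : Σ s, Y s} (huv : edist (f u.1 u.2) (f v.1 v.2) ≤ ρ) :
    wedgeEDist p u v ≤ K * (2 * τ + ρ) := by
  obtain ⟨s, a⟩ := u
  obtain ⟨t, b⟩ := v
  obtain rfl | hst := eq_or_ne s t
  · rw [wedgeEDist_mk_self]
    calc edist a b ≤ K * edist (f s a) (f s b) := hf s a b
      _ ≤ K * (2 * τ + ρ) := mul_le_mul_right (huv.trans le_add_self) _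
  · have hnear : edist (f s a) z ≤ τ ∨ edist (f t b) z ≤ τ :=
      hdisj.edist_le_or_edist_le hst (Set.mem_range_self a) (Set.mem_range_self b) (huv.trans_lt hρ)
    calc wedgeEDist p ⟨s, a⟩ ⟨t, b⟩
        = edist a (p s) + edist (p t) b := wedgeEDist_mk_of_ne p hst a b
      _ ≤ K * edist (f s a) (f s (p s)) + K * edist (f t (p t)) (f t b) :=
        add_le_add (hf s _ _) (hf t _ _)
      _ = K * (edist (f s a) z + edist z (f t b)) := by rw [hp, hp, mul_add]
      _ ≤ K * (2 * τ + ρ) := mul_le_mul_right (edist_add_edist_le_of_edist_le_or hnear huv) _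

end Wedge

/-- If `x₀ ∈ ⋂_s X_s` and for each `r > 0` there is `t > 0` such that the
family `{X_s ∖ B(x₀,t)}` is `r`-disjoint, then the map `⋁_s (X_s, x₀) → ⋃_s X_s` which is
the identity on each `X_s` is a coarse equivalence. -/
theorem stmt16 {S X : Type} [PseudoEMetricSpace X]
    (Xs : S → Set X) (x₀ : X) (h₀ : ∀ s, x₀ ∈ Xs s)
    (hd : ∀ r : ℝ, 0 < r → ∃ t : ℝ, 0 < t ∧ ∀ s s', s ≠ s' →
      ∀ a ∈ Xs s \ EMetric.closedBall x₀ (ENNReal.ofReal t),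
      ∀ b ∈ Xs s' \ EMetric.closedBall x₀ (ENNReal.ofReal t),
        ENNReal.ofReal r ≤ edist a b) :
    CoarseEquivE
      (wedgeEDist (Y := fun s => ↥(Xs s)) (fun s => ⟨x₀, h₀ s⟩))
      (fun a b : ↥(⋃ s, Xs s) => edist a b)
      (fun u => ⟨(u.2 : X), Set.mem_iUnion.mpr ⟨u.1, u.2.2⟩⟩) := by
  let p : ∀ s, Xs s := fun s => ⟨x₀, h₀ s⟩
  have hp : ∀ s, (p s : X) = x₀ := fun _ => rfl
  have hiso : ∀ s, Isometry ((↑) : Xs s → X) := fun _ => isometry_subtype_coe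
  refine ⟨fun R hR => ⟨R, hR, fun u v huv => ?_⟩, fun R hR => ?_, 0, le_rfl, fun ⟨x, hx⟩ => ?_⟩
  · have hle := edist_le_mul_wedgeEDist (fun s => (hiso s).lipschitz) hp u v
    rw [ENNReal.coe_one, one_mul] at hle
    exact hle.trans huv
  · obtain ⟨t, ht, hfar⟩ := hd (R + 1) (by positivity)
    have hdisj : RDisjoint (ENNReal.ofReal (R + 1)) fun s =>
        Set.range ((↑) : Xs s → X) \ Metric.closedEBall x₀ (ENNReal.ofReal t) := by
      simp only [Subtype.range_coe]
      exact fun s s' => hfar s s'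
    have hR_lt : ENNReal.ofReal R < ENNReal.ofReal (R + 1) :=
      (ENNReal.ofReal_lt_ofReal_iff (by positivity)).2 (lt_add_one R)
    refine ⟨2 * t + R, by positivity, fun u v huv => ?_⟩
    have hle := wedgeEDist_le_mul_of_rDisjoint (fun s => (hiso s).antilipschitz) hp hdisj hR_lt huv
    rwa [ENNReal.coe_one, one_mul, ← ENNReal.ofReal_ofNat 2, ← ENNReal.ofReal_mul zero_le_two,
      ← ENNReal.ofReal_add (by positivity) hR.le] at hle
  · obtain ⟨s, hs⟩ := Set.mem_iUnion.mp hx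
    exact ⟨⟨s, x, hs⟩, by simp only [edist_self, zero_le]⟩
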